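/- arXiv:2503.16002 — 2 statements merged into one kernel-verified Lean document; each statement's English description precedes it below -/
import Mathlib

section
/- In every delivery instance, every utilitarian optimal allocation is non-wasteful. -/
/-- A delivery instance: a finite tree rooted at the hub (encoded by a parent
function `par`; the edges of the tree are the pairs `{v, par v}` for `v ≠ hub`),
positive edge weights (`w v` is the weight of the edge between `v` and its
parent, for `v ≠ hub`), and `n` agents. -/
structure DeliveryInstance where
  V : Type
  fintypeV : Fintype V
  decEqV : DecidableEq V
  hub : V
  par : V → V
  w : V → ℝ
  par_hub : par hub = hub
  reaches_hub : ∀ v : V, ∃ k : ℕ, par^[k] v = hub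
  w_pos : ∀ v : V, v ≠ hub → 0 < w v
  n : ℕ
  n_pos : 0 < n

attribute [instance] DeliveryInstance.fintypeV DeliveryInstance.decEqV

namespace DeliveryInstance

variable (I : DeliveryInstance)

/-- `u` lies on the path from the hub to `v` (equivalently, `u` is a weak
ancestor of `v` in the tree rooted at the hub). -/
def Anc (u v : I.V) : Prop := ∃ k : ℕ, I.par^[k] v = u

/-- A leaf of the tree rooted at the hub: a vertex with no children. -/
def IsLeaf (v : I.V) : Prop := ∀ u : I.V, I.par u = v → u = v

/-- The set of leaves of the topology. -/
def leaves : Set I.V := {v : I.V | I.IsLeaf v}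

/-- The instance is unweighted if every edge has weight 1. -/
def Unweighted : Prop := ∀ v : I.V, v ≠ I.hub → I.w v = 1

/-- The cost of servicing a set `A` of orders: the total weight of the edges of
the tree that lie on the path from the hub to some vertex of `A` (the edge
between `u ≠ hub` and its parent lies on such a path iff `u` is a weak ancestor
of a member of `A`).  In particular `cost ∅ = 0`. -/
noncomputable def cost (A : Set I.V) : ℝ :=
  ∑ u : I.V, Set.indicator {u : I.V | u ≠ I.hub ∧ ∃ v ∈ A, I.Anc u v} I.w u

/-- The bundle of agent `i` under allocation `π`: the set of orders serviced by `i`. -/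
def bundle (π : I.V → Fin I.n) (i : Fin I.n) : Set I.V :=
  {v : I.V | v ≠ I.hub ∧ π v = i}

/-- An allocation is non-wasteful if every order `v` is serviced by an agent
that also services some leaf of the subtree rooted at `v`. -/
def NonWasteful (π : I.V → Fin I.n) : Prop :=
  ∀ v : I.V, v ≠ I.hub → ∃ l : I.V, I.IsLeaf l ∧ I.Anc v l ∧ π l = π v

/-- Total (utilitarian) cost of an allocation. -/
noncomputable def totalCost (π : I.V → Fin I.n) : ℝ :=
  ∑ i : Fin I.n, I.cost (I.bundle π i)

/-- The maximum bundle cost of an allocation. -/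
noncomputable def maxCost (π : I.V → Fin I.n) : ℝ :=
  Finset.univ.sup' ⟨⟨0, I.n_pos⟩, Finset.mem_univ _⟩ fun i : Fin I.n => I.cost (I.bundle π i)

/-- The minimax (MMS) share of the instance: the minimum over all allocations
of the maximum bundle cost. -/
noncomputable def MMSshare : ℝ :=
  Finset.univ.inf' ⟨fun _ => ⟨0, I.n_pos⟩, Finset.mem_univ _⟩
    fun π : I.V → Fin I.n => I.maxCost π

/-- An allocation is MMS if every bundle costs at most the MMS share. -/
def IsMMS (π : I.V → Fin I.n) : Prop :=
  ∀ i : Fin I.n, I.cost (I.bundle π i) ≤ I.MMSshare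

/-- Pareto optimality: no allocation makes every agent weakly better off and
some agent strictly better off. -/
def ParetoOptimal (π : I.V → Fin I.n) : Prop :=
  ¬ ∃ π' : I.V → Fin I.n,
      (∀ i : Fin I.n, I.cost (I.bundle π' i) ≤ I.cost (I.bundle π i)) ∧
      ∃ j : Fin I.n, I.cost (I.bundle π' j) < I.cost (I.bundle π j)

/-- Utilitarian optimality: minimizes the sum of bundle costs. -/
def UtilitarianOptimal (π : I.V → Fin I.n) : Prop :=
  ∀ π' : I.V → Fin I.n, I.totalCost π ≤ I.totalCost π'

/-- Egalitarian optimality: minimizes the maximum bundle cost. -/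
def EgalitarianOptimal (π : I.V → Fin I.n) : Prop :=
  ∀ π' : I.V → Fin I.n, I.maxCost π ≤ I.maxCost π'

/-- Envy-freeness. -/
def EF (π : I.V → Fin I.n) : Prop :=
  ∀ i j : Fin I.n, I.cost (I.bundle π i) ≤ I.cost (I.bundle π j)

/-- Envy-freeness up to one order. -/
def EF1 (π : I.V → Fin I.n) : Prop :=
  ∀ i j : Fin I.n,
    I.bundle π i = ∅ ∨ ∃ v ∈ I.bundle π i, I.cost (I.bundle π i \ {v}) ≤ I.cost (I.bundle π j)

end DeliveryInstance

/-!
Order the vertices by ancestry: `u ≤ v` if `u` lies on the path from the hub to `v`. Serving a set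
of orders then costs the weight of its lower closure, apart from the hub. Consider an order `x` that
is maximal among the vertices assigned to its own agent. If `x` were not a leaf, some `y > x` would
be served by another agent, who passes through `x` anyway. Handing `x` over to that agent costs them
nothing and saves the first agent the edge above `x`, so even Pareto optimality is violated. Hence
`x` is a leaf, and every order has such an `x` weakly below it in the tree.
-/

namespace DeliveryInstance

open Function

variable {I : DeliveryInstance} {π : I.V → Fin I.n} {A B : Set I.V} {u v x y : I.V}

theorem eq_hub_of_isPeriodicPt {k : ℕ} (hk : 0 < k) (hv : IsPeriodicPt I.par k v) :
    v = I.hub := by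
  have hhub : IsFixedPt I.par I.hub := I.par_hub
  obtain ⟨m, hm⟩ := I.reaches_hub v
  exact (hv.iterate m).eq_of_apply_eq ((hhub.isPeriodicPt k).iterate m) hk hk
    (hm.trans (hhub.iterate m).symm)

theorem Anc.trans (huv : I.Anc u v) (hvx : I.Anc v x) : I.Anc u x := by
  obtain ⟨j, rfl⟩ := huv
  obtain ⟨k, rfl⟩ := hvx
  exact ⟨j + k, iterate_add_apply _ _ _ _⟩

theorem Anc.antisymm (huv : I.Anc u v) (hvu : I.Anc v u) : u = v := by
  obtain ⟨j, rfl⟩ := huv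
  obtain ⟨k, hk⟩ := hvu
  have hv : IsPeriodicPt I.par (k + j) v := (iterate_add_apply _ _ _ _).trans hk
  obtain hj | hj := Nat.eq_zero_or_pos j
  · rw [hj, iterate_zero_apply]
  · rw [eq_hub_of_isPeriodicPt (Nat.add_pos_right k hj) hv, iterate_fixed I.par_hub]

/-- The ancestor order on the vertices of the tree rooted at the hub: `u ≤ v` if `u` lies on the
path from the hub to `v`, so that the hub is the least vertex and the leaves are the maximal
ones. -/
instance : PartialOrder I.V where
  le := I.Anc
  le_refl _ := ⟨0, rfl⟩
  le_trans _ _ _ := Anc.trans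
  le_antisymm _ _ := Anc.antisymm

theorem isBot_hub : IsBot I.hub := I.reaches_hub

theorem ne_hub_of_le (huv : u ≤ v) (hu : u ≠ I.hub) : v ≠ I.hub := by
  rintro rfl
  exact hu (huv.antisymm (isBot_hub u))

theorem isLeaf_of_isMax (hv : IsMax v) : I.IsLeaf v :=
  fun _ hu => (hv.eq_of_le ⟨1, hu⟩).symm

open scoped Classical in
/-- The edges traversed when serving the set `A` of orders, where the edge between `u ≠ I.hub` and
its parent is encoded by its lower endpoint `u`. -/
noncomputable def route (I : DeliveryInstance) (A : Set I.V) : Finset I.V :=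
  {u | u ≠ I.hub ∧ u ∈ lowerClosure A}

theorem mem_route : u ∈ I.route A ↔ u ≠ I.hub ∧ u ∈ lowerClosure A := by
  simp only [route, Finset.mem_filter, Finset.mem_univ, true_and]

theorem route_subset_route (h : A ⊆ lowerClosure B) : I.route A ⊆ I.route B := by
  intro u hu
  rw [mem_route] at hu ⊢
  exact ⟨hu.1, lowerClosure_le.2 h hu.2⟩

theorem w_nonneg_of_mem_route (hu : u ∈ I.route A) : 0 ≤ I.w u :=
  (I.w_pos u (mem_route.1 hu).1).le

theorem cost_eq_sum_route (A : Set I.V) : I.cost A = ∑ u ∈ I.route A, I.w u := by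
  classical
  simp only [cost, route, Set.indicator_apply, Finset.sum_filter]
  rfl

theorem cost_le_cost (h : A ⊆ lowerClosure B) : I.cost A ≤ I.cost B := by
  rw [cost_eq_sum_route, cost_eq_sum_route]
  exact Finset.sum_le_sum_of_subset_of_nonneg (route_subset_route h) fun u hu _ =>
    w_nonneg_of_mem_route hu

theorem cost_lt_cost (h : A ⊆ lowerClosure B) (hx : x ≠ I.hub) (hxA : x ∉ lowerClosure A)
    (hxB : x ∈ lowerClosure B) : I.cost A < I.cost B := by
  rw [cost_eq_sum_route, cost_eq_sum_route]
  exact Finset.sum_lt_sum_of_subset (route_subset_route h) (mem_route.2 ⟨hx, hxB⟩)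
    (fun hxr => hxA (mem_route.1 hxr).2) (I.w_pos x hx) fun u hu _ => w_nonneg_of_mem_route hu

theorem bundle_update_subset_lowerClosure (hx : x ≠ I.hub) (hxy : x ≤ y) (i : Fin I.n) :
    I.bundle (update π x (π y)) i ⊆ lowerClosure (I.bundle π i) := by
  rintro u ⟨hu, hui⟩
  obtain rfl | hux := eq_or_ne u x
  · rw [update_self] at hui
    exact ⟨y, ⟨ne_hub_of_le hxy hx, hui⟩, hxy⟩
  · rw [update_of_ne hux] at hui
    exact subset_lowerClosure ⟨hu, hui⟩

theorem notMem_lowerClosure_bundle_update (hmax : Maximal (π · = π x) x) {j : Fin I.n}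
    (hj : j ≠ π x) : x ∉ lowerClosure (I.bundle (update π x j) (π x)) := by
  rintro ⟨u, ⟨-, hu⟩, hxu⟩
  obtain rfl | hux := eq_or_ne u x
  · exact hj (by rwa [update_self] at hu)
  · rw [update_of_ne hux] at hu
    exact hux (hmax.eq_of_le hu hxu).symm

theorem ParetoOptimal.isMax_of_maximal (h : I.ParetoOptimal π) (hx : x ≠ I.hub)
    (hmax : Maximal (π · = π x) x) : IsMax x := by
  rw [isMax_iff_forall_not_lt]
  intro y hxy
  have hy : π y ≠ π x := hmax.not_prop_of_gt hxy
  have hsub := bundle_update_subset_lowerClosure (π := π) hx hxy.le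
  exact h ⟨update π x (π y), fun i => cost_le_cost (hsub i), π x,
    cost_lt_cost (hsub _) hx (notMem_lowerClosure_bundle_update hmax hy)
      (subset_lowerClosure ⟨hx, rfl⟩)⟩

theorem UtilitarianOptimal.paretoOptimal (h : I.UtilitarianOptimal π) : I.ParetoOptimal π := by
  rintro ⟨π', hle, j, hlt⟩
  exact (h π').not_gt (Finset.sum_lt_sum (fun i _ => hle i) ⟨j, Finset.mem_univ j, hlt⟩)

end DeliveryInstance

open DeliveryInstance in
theorem stmt3_general (I : DeliveryInstance) (π : I.V → Fin I.n)
    (h : I.ParetoOptimal π) : I.NonWasteful π := by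
  intro v hv
  obtain ⟨x, hvx, hmax⟩ := Finite.exists_le_maximal (p := (π · = π v)) rfl
  have hxv : π x = π v := hmax.prop
  have hx : IsMax x := h.isMax_of_maximal (ne_hub_of_le hvx hv) (by rwa [hxv])
  exact ⟨x, isLeaf_of_isMax hx, hvx, hxv⟩

/-- Every utilitarian optimal allocation is non-wasteful. -/
theorem stmt3 (I : DeliveryInstance) (π : I.V → Fin I.n)
    (h : I.UtilitarianOptimal π) : I.NonWasteful π :=
  stmt3_general I π h.paretoOptimal
end

section
/- Let k, B ∈ ℕ and let a_1,…,a_{3k} be positive integers with Σ_{i=1}^{3k} a_i = k·B and B/4 < a_i < B/2 for every i. Let I be the unweighted delivery instance with k agents whose topology is built as follows: the hub h is adjacent to 3k vertices c_1,…,c_{3k}, and each c_i is additionally adjacent to a_i leaves. Then MMS(I) ≤ B + 3 if and only if there exists a partition of {1,…,3k} into k sets S_1,…,S_k, each of size exactly 3, such that Σ_{i∈S_j} a_i = B for every j ∈ [k]. -/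
/-!
In a star of stars, an agent pays for each leaf it serves and for each center it visits, that is,
each center it serves itself or of which it serves a leaf. Every leaf is served once and every
center is visited at least once, so the costs add up to at least the number of orders, which is
`n * (B + r)` with `n` agents (here `r = 3`). If no cost exceeds `B + r`, then all costs are equal
to `B + r` and every center is visited by exactly one agent, who therefore serves all its leaves.
Hence the set `T` of centers visited by an agent satisfies `|T| + ∑ i ∈ T, a i = B + r`, and
`|T| = r`: fewer than `r` centers would have at most `B` leaves, more than `r` at least `B`.
Conversely, a partition into `r`-sets with sum `B` is an allocation in which all costs are `B + r`.
-/

section Counting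

variable {ι κ : Type*}

theorem sum_card_eq_sum_card_filter_mem [Fintype ι] [Fintype κ] [DecidableEq ι]
    (T : κ → Finset ι) : ∑ j, (T j).card = ∑ i, (Finset.univ.filter fun j => i ∈ T j).card := by
  simpa [Finset.bipartiteAbove, Finset.bipartiteBelow] using
    Finset.sum_card_bipartiteAbove_eq_sum_card_bipartiteBelow (fun j i => i ∈ T j)
      (s := Finset.univ) (t := Finset.univ)

theorem one_le_card_filter_mem [Fintype κ] [DecidableEq ι] {T : κ → Finset ι} {i : ι}
    (hi : ∃ j, i ∈ T j) : 1 ≤ (Finset.univ.filter fun j => i ∈ T j).card :=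
  Finset.card_pos.2 <| hi.imp fun _ hj => Finset.mem_filter.2 ⟨Finset.mem_univ _, hj⟩

theorem card_le_sum_card_of_cover [Fintype ι] [Fintype κ] {T : κ → Finset ι}
    (hT : ∀ i, ∃ j, i ∈ T j) : Fintype.card ι ≤ ∑ j, (T j).card := by
  classical
  rw [sum_card_eq_sum_card_filter_mem, ← Finset.card_univ, Finset.card_eq_sum_ones]
  exact Finset.sum_le_sum fun i _ => one_le_card_filter_mem (hT i)

theorem existsUnique_mem_of_sum_card_le [Fintype ι] [Fintype κ] {T : κ → Finset ι}
    (hT : ∀ i, ∃ j, i ∈ T j) (hcard : ∑ j, (T j).card ≤ Fintype.card ι) (i : ι) :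
    ∃! j, i ∈ T j := by
  classical
  have hsum := hcard.antisymm (card_le_sum_card_of_cover hT)
  rw [sum_card_eq_sum_card_filter_mem, ← Finset.card_univ, Finset.card_eq_sum_ones] at hsum
  have hone := (Finset.sum_eq_sum_iff_of_le fun i _ => one_le_card_filter_mem (hT i)).1 hsum.symm
  simpa using Finset.singleton_iff_unique_mem _ |>.1 <|
    Finset.card_eq_one.1 (hone i (Finset.mem_univ i)).symm

theorem card_eq_of_card_add_sum_eq {T : Finset ι} {a : ι → ℕ} {r B : ℕ}
    (hlow : ∀ i ∈ T, B ≤ (r + 1) * a i) (hhigh : ∀ i ∈ T, (r - 1) * a i ≤ B)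
    (h : T.card + ∑ i ∈ T, a i = B + r) : T.card = r := by
  have hB_le : T.card * B ≤ (r + 1) * ∑ i ∈ T, a i := by
    simpa [Finset.mul_sum] using Finset.card_nsmul_le_sum T _ B hlow
  have hle_B : (r - 1) * ∑ i ∈ T, a i ≤ T.card * B := by
    simpa [Finset.mul_sum] using Finset.sum_le_card_nsmul T _ B hhigh
  rcases lt_trichotomy T.card r with hlt | heq | hgt
  · have hsum_gt : B + 1 ≤ ∑ i ∈ T, a i := by omega
    have hT : T.card * B ≤ (r - 1) * B := Nat.mul_le_mul_right B (by omega)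
    have hr : (r - 1) * (B + 1) ≤ (r - 1) * B :=
      (Nat.mul_le_mul_left _ hsum_gt).trans (hle_B.trans hT)
    -- Expanding the left side leaves `r - 1 ≤ 0`, so that `T.card < r` is `0`.
    have hempty : T = ∅ := Finset.card_eq_zero.1 (by rw [mul_add_one] at hr; omega)
    simp [hempty] at hsum_gt
  · exact heq
  · have hsum_ge : (r + 1) * B ≤ (r + 1) * ∑ i ∈ T, a i :=
      (Nat.mul_le_mul_right B hgt).trans hB_le
    have := Nat.le_of_mul_le_mul_left hsum_ge r.succ_pos
    omega

end Counting

section Assignment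

variable {ι κ : Type*} {L : ι → Type*} [Fintype ι] [∀ i, Fintype (L i)] [DecidableEq κ]

/-- The centers that agent `j` has to visit when the centers `ι` and the leaves `L i` of each
center are assigned to agents by `x`: those assigned to `j`, and those with a leaf assigned to
`j`. -/
def visitedCenters (x : ι ⊕ (Σ i, L i) → κ) (j : κ) : Finset ι :=
  {i | x (.inl i) = j ∨ ∃ l, x (.inr ⟨i, l⟩) = j}

/-- The leaves assigned to agent `j` by `x`. These are exactly the leaves that `j` has to visit. -/
def servedLeaves (x : ι ⊕ (Σ i, L i) → κ) (j : κ) : Finset (Σ i, L i) :=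
  {p | x (.inr p) = j}

/-- The assignment that gives each leaf to the owner `f i` of its center `i`. -/
def assignByCenter (L : ι → Type*) (f : ι → κ) : ι ⊕ (Σ i, L i) → κ :=
  Sum.elim f fun p => f p.1

theorem mem_visitedCenters {x : ι ⊕ (Σ i, L i) → κ} {i : ι} {j : κ} :
    i ∈ visitedCenters x j ↔ x (.inl i) = j ∨ ∃ l, x (.inr ⟨i, l⟩) = j := by
  simp [visitedCenters]

theorem mem_servedLeaves {x : ι ⊕ (Σ i, L i) → κ} {p : Σ i, L i} {j : κ} :
    p ∈ servedLeaves x j ↔ x (.inr p) = j := by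
  simp [servedLeaves]

theorem exists_mem_visitedCenters (x : ι ⊕ (Σ i, L i) → κ) (i : ι) :
    ∃ j, i ∈ visitedCenters x j :=
  ⟨x (.inl i), mem_visitedCenters.2 (.inl rfl)⟩

theorem fst_mem_visitedCenters (x : ι ⊕ (Σ i, L i) → κ) (p : Σ i, L i) :
    p.1 ∈ visitedCenters x (x (.inr p)) :=
  mem_visitedCenters.2 (.inr ⟨p.2, rfl⟩)

theorem sum_card_servedLeaves [Fintype κ] (x : ι ⊕ (Σ i, L i) → κ) :
    ∑ j, (servedLeaves x j).card = ∑ i, Fintype.card (L i) := by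
  rw [← Fintype.card_sigma, ← Finset.card_univ]
  exact (Finset.card_eq_sum_card_fiberwise fun _ _ => Finset.mem_coe.2 (Finset.mem_univ _)).symm

theorem card_servedLeaves {x : ι ⊕ (Σ i, L i) → κ}
    (hx : ∀ i, ∃! j, i ∈ visitedCenters x j) (j : κ) :
    (servedLeaves x j).card = ∑ i ∈ visitedCenters x j, Fintype.card (L i) := by
  have hserved : servedLeaves x j = (visitedCenters x j).sigma fun _ => Finset.univ := by
    ext p
    simp only [mem_servedLeaves, Finset.mem_sigma, Finset.mem_univ, and_true]
    exact ⟨fun hp => hp ▸ fst_mem_visitedCenters x p,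
      fun hp => (hx p.1).unique (fst_mem_visitedCenters x p) hp⟩
  simp [hserved, Finset.card_sigma]

theorem mem_visitedCenters_assignByCenter {f : ι → κ} {i : ι} {j : κ} :
    i ∈ visitedCenters (assignByCenter L f) j ↔ f i = j := by
  simp +contextual [mem_visitedCenters, assignByCenter]

theorem card_add_sum_card_le_sum_card_add_card [Fintype κ] (x : ι ⊕ (Σ i, L i) → κ) :
    Fintype.card ι + ∑ i, Fintype.card (L i) ≤
      ∑ j, ((visitedCenters x j).card + (servedLeaves x j).card) := by
  rw [Finset.sum_add_distrib, sum_card_servedLeaves]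
  gcongr
  exact card_le_sum_card_of_cover (exists_mem_visitedCenters x)

theorem existsUnique_mem_visitedCenters [Fintype κ] {x : ι ⊕ (Σ i, L i) → κ}
    (hx : ∑ j, ((visitedCenters x j).card + (servedLeaves x j).card) ≤
      Fintype.card ι + ∑ i, Fintype.card (L i)) (i : ι) :
    ∃! j, i ∈ visitedCenters x j := by
  rw [Finset.sum_add_distrib, sum_card_servedLeaves, add_le_add_iff_right] at hx
  exact existsUnique_mem_of_sum_card_le (exists_mem_visitedCenters x) hx i

theorem exists_partition_of_assignment [Fintype κ] {r B : ℕ}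
    (horders : Fintype.card κ * (B + r) ≤ Fintype.card ι + ∑ i, Fintype.card (L i))
    (hlow : ∀ i, B ≤ (r + 1) * Fintype.card (L i))
    (hhigh : ∀ i, (r - 1) * Fintype.card (L i) ≤ B) {x : ι ⊕ (Σ i, L i) → κ}
    (hx : ∀ j, (visitedCenters x j).card + (servedLeaves x j).card ≤ B + r) :
    ∃ S : κ → Finset ι, (∀ i, ∃! j, i ∈ S j) ∧ (∀ j, (S j).card = r) ∧
      ∀ j, ∑ i ∈ S j, Fintype.card (L i) = B := by
  have hle : ∑ j, ((visitedCenters x j).card + (servedLeaves x j).card) ≤ ∑ _j : κ, (B + r) :=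
    Finset.sum_le_sum fun j _ => hx j
  have hge : ∑ _j : κ, (B + r) ≤ Fintype.card ι + ∑ i, Fintype.card (L i) := by
    simpa using horders
  have hunique := existsUnique_mem_visitedCenters (hle.trans hge)
  have hcost (j) : (visitedCenters x j).card + (servedLeaves x j).card = B + r :=
    (Finset.sum_eq_sum_iff_of_le fun j _ => hx j).1
      (hle.antisymm (hge.trans (card_add_sum_card_le_sum_card_add_card x))) j (Finset.mem_univ j)
  simp only [card_servedLeaves hunique] at hcost
  have hcard (j) : (visitedCenters x j).card = r :=
    card_eq_of_card_add_sum_eq (fun i _ => hlow i) (fun i _ => hhigh i) (hcost j)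
  refine ⟨visitedCenters x, hunique, hcard, fun j => ?_⟩
  have := hcost j
  rw [hcard j] at this
  omega

theorem exists_assignment_of_partition {r B : ℕ} {S : κ → Finset ι} (hS : ∀ i, ∃! j, i ∈ S j)
    (hcard : ∀ j, (S j).card = r) (hsum : ∀ j, ∑ i ∈ S j, Fintype.card (L i) = B) :
    ∃ x : ι ⊕ (Σ i, L i) → κ, ∀ j,
      (visitedCenters x j).card + (servedLeaves x j).card = B + r := by
  choose f hf hunique using hS
  have hvisited : visitedCenters (assignByCenter L f) = S := by
    ext j i
    rw [mem_visitedCenters_assignByCenter]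
    exact ⟨fun h => h ▸ hf i, fun h => (hunique i j h).symm⟩
  refine ⟨assignByCenter L f, fun j => ?_⟩
  rw [card_servedLeaves (fun i => hvisited ▸ ⟨f i, hf i, hunique i⟩), hvisited, hcard, hsum,
    add_comm]

end Assignment

namespace DeliveryInstance

section General

variable {I : DeliveryInstance} {u v : I.V}

theorem anc_iff_eq_or_anc_par : I.Anc u v ↔ v = u ∨ I.Anc u (I.par v) :=
  ⟨fun | ⟨0, h⟩ => .inl h | ⟨n + 1, h⟩ => .inr ⟨n, h⟩,
    fun | .inl h => ⟨0, h⟩ | .inr ⟨n, h⟩ => ⟨n + 1, h⟩⟩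

theorem anc_hub_iff : I.Anc u I.hub ↔ I.hub = u := by
  simp [Anc, Function.iterate_fixed I.par_hub]

theorem MMSshare_le_iff {c : ℝ} : I.MMSshare ≤ c ↔
    ∃ π : I.V → Fin I.n, ∀ j, I.cost (I.bundle π j) ≤ c := by
  refine (Finset.inf'_le_iff _).trans ?_
  simp only [Finset.mem_univ, true_and]
  exact exists_congr fun π => (Finset.sup'_le_iff _ _).trans (by simp)

theorem exists_mem_bundle_iff {α : Type*} (e : {v : I.V // v ≠ I.hub} ≃ α) {π : I.V → Fin I.n}
    {j : Fin I.n} {P : I.V → Prop} :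
    (∃ v ∈ I.bundle π j, P v) ↔ ∃ y, π (e.symm y) = j ∧ P (e.symm y) := by
  refine .trans ?_ (e.symm.surjective.exists (p := fun v => π v = j ∧ P v))
  simp [bundle, and_assoc, and_left_comm]

open Classical in
theorem Unweighted.cost_eq_card (hU : I.Unweighted) (A : Set I.V) :
    I.cost A = ((Finset.univ.filter fun u : {v : I.V // v ≠ I.hub} =>
      ∃ v ∈ A, I.Anc u v).card : ℝ) := by
  rw [cost, Fintype.sum_eq_add_sum_subtype_ne _ I.hub, Finset.card_filter, Nat.cast_sum]
  simp only [Set.indicator_apply, Set.mem_ofPred_eq, ne_eq, not_true_eq_false, false_and, if_false,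
    zero_add]
  refine Finset.sum_congr rfl fun u _ => ?_
  simp [u.2, hU u u.2]

end General

/-- The tree of `I` is a star of stars: `e` names the orders so that the centers `i : ι` are
adjacent to the hub and the leaves `⟨i, l⟩`, `l : L i`, are adjacent to the center `i`. -/
structure IsStarOfStars (I : DeliveryInstance) {ι : Type*} {L : ι → Type*}
    (e : {v : I.V // v ≠ I.hub} ≃ ι ⊕ Σ i, L i) : Prop where
  par_center (i : ι) : I.par (e.symm (.inl i)) = I.hub
  par_leaf (i : ι) (l : L i) : I.par (e.symm (.inr ⟨i, l⟩)) = e.symm (.inl i)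

namespace IsStarOfStars

variable {I : DeliveryInstance} {ι : Type*} {L : ι → Type*}
  {e : {v : I.V // v ≠ I.hub} ≃ ι ⊕ Σ i, L i}

theorem anc_center_iff (h : I.IsStarOfStars e) {y : ι ⊕ Σ i, L i} {i : ι} :
    I.Anc (e.symm y) (e.symm (.inl i)) ↔ .inl i = y := by
  rw [anc_iff_eq_or_anc_par, h.par_center, anc_hub_iff, or_iff_left (e.symm y).2.symm,
    Subtype.val_inj, e.symm.injective.eq_iff]

theorem anc_leaf_iff (h : I.IsStarOfStars e) {y : ι ⊕ Σ i, L i} {i : ι} {l : L i} :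
    I.Anc (e.symm y) (e.symm (.inr ⟨i, l⟩)) ↔ .inr ⟨i, l⟩ = y ∨ .inl i = y := by
  rw [anc_iff_eq_or_anc_par, h.par_leaf, h.anc_center_iff, Subtype.val_inj,
    e.symm.injective.eq_iff]

theorem exists_mem_bundle_anc_center_iff (h : I.IsStarOfStars e) {π : I.V → Fin I.n}
    {j : Fin I.n} {i : ι} : (∃ v ∈ I.bundle π j, I.Anc (e.symm (.inl i)) v) ↔
      π (e.symm (.inl i)) = j ∨ ∃ l, π (e.symm (.inr ⟨i, l⟩)) = j := by
  simp [exists_mem_bundle_iff e, h.anc_center_iff, h.anc_leaf_iff]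

theorem exists_mem_bundle_anc_leaf_iff (h : I.IsStarOfStars e) {π : I.V → Fin I.n}
    {j : Fin I.n} {p : Σ i, L i} : (∃ v ∈ I.bundle π j, I.Anc (e.symm (.inr p)) v) ↔
      π (e.symm (.inr p)) = j := by
  simp [exists_mem_bundle_iff e, h.anc_center_iff, h.anc_leaf_iff]

variable [Fintype ι] [∀ i, Fintype (L i)]

theorem cost_bundle (h : I.IsStarOfStars e) (hU : I.Unweighted) (π : I.V → Fin I.n)
    (j : Fin I.n) : I.cost (I.bundle π j) =
      ((visitedCenters (fun y => π (e.symm y)) j).card +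
        (servedLeaves (fun y => π (e.symm y)) j).card : ℕ) := by
  classical
  rw [hU.cost_eq_card, Finset.card_filter, ← e.symm.sum_comp, Fintype.sum_sum_type]
  simp only [h.exists_mem_bundle_anc_center_iff, h.exists_mem_bundle_anc_leaf_iff,
    ← Finset.card_filter]
  simp [visitedCenters, servedLeaves]

theorem MMSshare_le_natCast_iff (h : I.IsStarOfStars e) (hU : I.Unweighted) {c : ℕ} :
    I.MMSshare ≤ c ↔ ∃ x : ι ⊕ (Σ i, L i) → Fin I.n, ∀ j,
      (visitedCenters x j).card + (servedLeaves x j).card ≤ c := by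
  have : Nonempty (Fin I.n) := ⟨⟨0, I.n_pos⟩⟩
  have hinj : Function.Injective fun y => (e.symm y : I.V) :=
    Subtype.val_injective.comp e.symm.injective
  simp only [MMSshare_le_iff, h.cost_bundle hU, Nat.cast_le]
  exact (hinj.surjective_comp_right.exists (p := fun x => ∀ j,
    (visitedCenters x j).card + (servedLeaves x j).card ≤ c)).symm

end IsStarOfStars

end DeliveryInstance

theorem stmt16_general {ι : Type*} {L : ι → Type*} [Fintype ι] [∀ i, Fintype (L i)]
    {I : DeliveryInstance} (hU : I.Unweighted) {e : {v : I.V // v ≠ I.hub} ≃ ι ⊕ Σ i, L i}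
    (he : I.IsStarOfStars e) {r B : ℕ}
    (horders : I.n * (B + r) ≤ Fintype.card ι + ∑ i, Fintype.card (L i))
    (hlow : ∀ i, B ≤ (r + 1) * Fintype.card (L i))
    (hhigh : ∀ i, (r - 1) * Fintype.card (L i) ≤ B) :
    I.MMSshare ≤ (B : ℝ) + r ↔
      ∃ S : Fin I.n → Finset ι, (∀ i, ∃! j, i ∈ S j) ∧ (∀ j, (S j).card = r) ∧
        ∀ j, ∑ i ∈ S j, Fintype.card (L i) = B := by
  rw [← Nat.cast_add, he.MMSshare_le_natCast_iff hU]
  constructor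
  · rintro ⟨x, hx⟩
    exact exists_partition_of_assignment (by simpa using horders) hlow hhigh hx
  · rintro ⟨S, hS, hcard, hS_sum⟩
    exact (exists_assignment_of_partition hS hcard hS_sum).imp fun _ hx j => (hx j).le

/-- Let `a₁, …, a_{3k}` be positive integers summing to `k·B`
with `B/4 < aᵢ < B/2`, and let `I` be the unweighted `k`-agent instance whose
topology has the hub adjacent to centers `c₁, …, c_{3k}`, with `aᵢ` leaves
attached to `cᵢ`.  Then `MMS(I) ≤ B + 3` iff `[3k]` can be partitioned into `k`
triples each summing to `B`. -/
theorem stmt16 (k B : ℕ) (a : Fin (3 * k) → ℕ)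
    (hpos : ∀ i, 0 < a i) (hsum : ∑ i, a i = k * B)
    (hlow : ∀ i, B < 4 * a i) (hhigh : ∀ i, 2 * a i < B)
    (I : DeliveryInstance) (hU : I.Unweighted) (hk : I.n = k)
    (e : {v : I.V // v ≠ I.hub} ≃ (Fin (3 * k) ⊕ Σ i : Fin (3 * k), Fin (a i)))
    (hparC : ∀ i : Fin (3 * k), I.par (e.symm (Sum.inl i)).1 = I.hub)
    (hparL : ∀ (i : Fin (3 * k)) (j : Fin (a i)),
      I.par (e.symm (Sum.inr ⟨i, j⟩)).1 = (e.symm (Sum.inl i)).1) :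
    I.MMSshare ≤ (B : ℝ) + 3 ↔
      ∃ S : Fin k → Finset (Fin (3 * k)),
        (∀ i : Fin (3 * k), ∃! j : Fin k, i ∈ S j) ∧
        (∀ j, (S j).card = 3) ∧
        (∀ j, ∑ i ∈ S j, a i = B) := by
  subst hk
  simpa using stmt16_general hU ⟨hparC, hparL⟩ (r := 3)
    (by simp only [Fintype.card_fin, hsum]; lia) (by simpa using fun i => (hlow i).le)
    (by simpa using fun i => (hhigh i).le)
end
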